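/- For θ > 0 and a₁,…,aₙ > 0, and (Y₁,…,Yₙ) a Dirichlet(θ/n,…,θ/n)-distributed (or more generally Dirichlet(θ₁,…,θₙ)) random vector, the generalized Markov–Krein identity holds: E[(1 + z·Σᵢ aᵢYᵢ)^{-θ}] = ∏ᵢ (1 + z aᵢ)^{-θᵢ} for all z ≥ 0, where θ = Σᵢ θᵢ. -/

import Mathlib

open MeasureTheory ProbabilityTheory Real Set

/-- The Dirichlet distribution with parameters `θ : Fin (n+1) → ℝ`, realized as a measure on
`Fin (n+1) → ℝ`. -/
noncomputable def dirichletMeasure {n : ℕ} (θ : Fin (n + 1) → ℝ) :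
    Measure (Fin (n + 1) → ℝ) :=
  Measure.map (fun y i => if h : (i : ℕ) < n then y ⟨i, h⟩ else 1 - ∑ j, y j)
    ((volume : Measure (Fin n → ℝ)).withDensity (fun y => ENNReal.ofReal
      (if (∀ i, 0 < y i) ∧ ∑ i, y i < 1 then
        (Real.Gamma (∑ i, θ i) / ∏ i, Real.Gamma (θ i)) *
          (∏ i : Fin n, y i ^ (θ i.castSucc - 1)) *
          (1 - ∑ i, y i) ^ (θ (Fin.last n) - 1)
      else 0)))

/-- Unnormalised gamma density. -/
noncomputable def gKernel (c r x : ℝ) : ℝ := if 0 < x then x ^ (c - 1) * Real.exp (-(r * x)) else 0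

lemma gKernel_nonneg (c r x : ℝ) : 0 ≤ gKernel c r x := by
  unfold gKernel; split_ifs with h
  · positivity
  · exact le_rfl

lemma gKernel_pos_arg (c r x : ℝ) (hx : 0 < x) :
    gKernel c r x = x ^ (c - 1) * Real.exp (-(r * x)) := by
  unfold gKernel; rw [if_pos hx]

lemma gKernel_nonpos_arg (c r x : ℝ) (hx : ¬ 0 < x) : gKernel c r x = 0 := by
  unfold gKernel; rw [if_neg hx]

lemma measurable_gKernel (c : ℝ) : Measurable (fun p : ℝ × ℝ => gKernel c p.1 p.2) := by
  unfold gKernel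
  refine Measurable.ite (measurableSet_lt measurable_const measurable_snd) ?_ measurable_const
  fun_prop

lemma lintegral_gKernel {c r : ℝ} (hc : 0 < c) (hr : 0 < r) :
    ∫⁻ x, ENNReal.ofReal (gKernel c r x) = ENNReal.ofReal (r ^ (-c) * Real.Gamma c) := by
  have key := Real.integral_rpow_mul_exp_neg_mul_Ioi hc hr
  have hG := Real.Gamma_pos_of_pos hc
  have hint : IntegrableOn (fun x ↦ x ^ (c - 1) * rexp (-(r * x))) (Ioi 0) :=
    .of_integral_ne_zero (by rw [key]; positivity)
  have e : (fun x => gKernel c r x) =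
      (Ioi (0:ℝ)).indicator (fun x ↦ x ^ (c - 1) * rexp (-(r * x))) := by
    ext x; simp [gKernel, Set.indicator]
  have hint' : Integrable (fun x => gKernel c r x) := by
    rw [e]; exact hint.integrable_indicator measurableSet_Ioi
  rw [← ofReal_integral_eq_lintegral_ofReal hint' (Filter.Eventually.of_forall (gKernel_nonneg c r)),
    e, integral_indicator measurableSet_Ioi, key, one_div, Real.inv_rpow hr.le, Real.rpow_neg hr.le]

lemma lintegral_prod_fin {n : ℕ} (f : Fin n → ℝ → ENNReal) (hf : ∀ i, Measurable (f i)) :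
    ∫⁻ x : Fin n → ℝ, ∏ i, f i (x i) = ∏ i, ∫⁻ t, f i t := by
  induction n with
  | zero => simp [volume_pi]
  | succ n ih =>
    have h := (volume_preserving_piFinSuccAbove (fun _ : Fin (n+1) => ℝ) 0).symm
    rw [← h.lintegral_comp_emb (MeasurableEquiv.measurableEmbedding _)]
    simp only [MeasurableEquiv.piFinSuccAbove_symm_apply, Fin.insertNthEquiv,
      Fin.prod_univ_succ, Fin.insertNth_zero, Equiv.coe_fn_mk, Fin.cons_succ,
      Fin.zero_succAbove, cast_eq, Fin.cons_zero]
    rw [← ih (fun i => f i.succ) (fun i => hf _)]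
    rw [← lintegral_prod_mul (hf 0).aemeasurable]
    · rfl
    · exact (Finset.measurable_prod _ fun i _ => (hf _).comp (measurable_pi_apply i)).aemeasurable

lemma lintegral_smul_fin {n : ℕ} (F : (Fin n → ℝ) → ENNReal) (hF : Measurable F) {s : ℝ}
    (hs : 0 < s) : ∫⁻ x, F x = ENNReal.ofReal (s ^ n) * ∫⁻ y, F (s • y) := by
  have h := Measure.map_addHaar_smul (volume : Measure (Fin n → ℝ)) hs.ne'
  rw [← lintegral_map hF (measurable_const_smul s), h, lintegral_smul_measure, smul_eq_mul,
    ← mul_assoc, ← ENNReal.ofReal_mul (by positivity)]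
  simp only [Module.finrank_fintype_fun_eq_card, Fintype.card_fin]
  rw [abs_of_pos (by positivity), mul_inv_cancel₀ (by positivity)]
  simp

/-- Unnormalised Dirichlet density. -/
noncomputable def dDens {n : ℕ} (θ : Fin (n + 1) → ℝ) (y : Fin n → ℝ) : ℝ :=
  if (∀ i, 0 < y i) ∧ ∑ i, y i < 1 then
    (∏ i : Fin n, y i ^ (θ i.castSucc - 1)) * (1 - ∑ i, y i) ^ (θ (Fin.last n) - 1) else 0

lemma measurableSet_simplex (n : ℕ) :
    MeasurableSet {y : Fin n → ℝ | (∀ i, 0 < y i) ∧ ∑ i, y i < 1} := by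
  have h1 : MeasurableSet (⋂ i : Fin n, {y : Fin n → ℝ | 0 < y i}) :=
    MeasurableSet.iInter fun i => measurableSet_lt measurable_const (measurable_pi_apply i)
  have h2 : MeasurableSet {y : Fin n → ℝ | ∑ i, y i < 1} :=
    measurableSet_lt (by fun_prop) measurable_const
  convert h1.inter h2 using 1
  ext y; simp

lemma measurable_dDens {n : ℕ} (θ : Fin (n + 1) → ℝ) : Measurable (dDens θ) := by
  unfold dDens
  refine Measurable.ite (measurableSet_simplex n) ?_ measurable_const
  fun_prop

lemma dDens_nonneg {n : ℕ} (θ : Fin (n + 1) → ℝ) (y : Fin n → ℝ) : 0 ≤ dDens θ y := by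
  unfold dDens; split_ifs with h
  · have : 0 < 1 - ∑ i, y i := by linarith [h.2]
    have := Finset.prod_nonneg (s := Finset.univ)
      (f := fun i => y i ^ (θ (Fin.castSucc i) - 1)) (fun i _ => (Real.rpow_pos_of_pos (h.1 i) _).le)
    positivity
  · exact le_rfl

/-- The linear form. -/
noncomputable def linF {n : ℕ} (b : Fin (n + 1) → ℝ) (y : Fin n → ℝ) : ℝ :=
  (∑ i : Fin n, b i.castSucc * y i) + b (Fin.last n) * (1 - ∑ i, y i)

lemma measurable_linF {n : ℕ} (b : Fin (n + 1) → ℝ) : Measurable (linF b) := by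
  unfold linF; fun_prop

lemma pointwise_pos {n : ℕ} (θ b : Fin (n + 1) → ℝ) (y : Fin n → ℝ) {s : ℝ} (hs : 0 < s) :
    s ^ n * ((∏ i : Fin n, gKernel (θ i.castSucc) (b i.castSucc) ((s • y) i)) *
      gKernel (θ (Fin.last n)) (b (Fin.last n)) (s - ∑ i, (s • y) i))
      = dDens θ y * gKernel (∑ i, θ i) (linF b y) s := by
  have e1 : s - ∑ i, (s • y) i = s * (1 - ∑ i, y i) := by
    simp [← Finset.mul_sum]; ring
  rw [e1]
  by_cases h : (∀ i, 0 < y i) ∧ ∑ i, y i < 1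
  · have h1 : 0 < 1 - ∑ i, y i := by linarith [h.2]
    rw [dDens, if_pos h, gKernel_pos_arg _ _ s hs, gKernel_pos_arg _ _ _ (mul_pos hs h1)]
    have : ∀ i : Fin n, gKernel (θ i.castSucc) (b i.castSucc) ((s • y) i) =
        s ^ (θ i.castSucc - 1) * (y i ^ (θ i.castSucc - 1)) *
          Real.exp (-(b i.castSucc * (s * y i))) := by
      intro i
      rw [Pi.smul_apply, smul_eq_mul, gKernel_pos_arg _ _ _ (mul_pos hs (h.1 i)),
        Real.mul_rpow hs.le (h.1 i).le]
    simp only [this, Finset.prod_mul_distrib]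
    rw [← Real.exp_sum, Real.mul_rpow hs.le h1.le, ← Real.rpow_sum_of_pos hs]
    have e2 : s ^ (∑ i, θ i - 1) = s ^ n * s ^ (∑ i : Fin n, (θ i.castSucc - 1)) *
        s ^ (θ (Fin.last n) - 1) := by
      rw [← Real.rpow_natCast, ← Real.rpow_add hs, ← Real.rpow_add hs]
      congr 1
      rw [Fin.sum_univ_castSucc, Finset.sum_sub_distrib]
      simp; ring
    have e3 : Real.exp (-(linF b y * s)) =
        Real.exp (∑ i : Fin n, -(b i.castSucc * (s * y i))) *
          Real.exp (-(b (Fin.last n) * (s * (1 - ∑ i, y i)))) := by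
      rw [← Real.exp_add]
      congr 1
      rw [linF, Finset.sum_neg_distrib]
      have : ∑ i : Fin n, b i.castSucc * (s * y i) = s * ∑ i : Fin n, b i.castSucc * y i := by
        rw [Finset.mul_sum]; exact Finset.sum_congr rfl fun i _ => by ring
      rw [this]; ring
    rw [e2, e3]; ring
  · rw [dDens, if_neg h, zero_mul]
    by_cases h0 : ∀ i, 0 < y i
    · have h1 : ¬ ∑ i, y i < 1 := fun h' => h ⟨h0, h'⟩
      rw [gKernel_nonpos_arg (θ (Fin.last n))]
      · simp
      · rw [mul_pos_iff_of_pos_left hs]; linarith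
    · push Not at h0
      obtain ⟨i, hi⟩ := h0
      rw [Finset.prod_eq_zero (Finset.mem_univ i)]
      · simp
      · apply gKernel_nonpos_arg
        rw [Pi.smul_apply, smul_eq_mul, mul_pos_iff_of_pos_left hs]; linarith

lemma pointwise_nonpos {n : ℕ} (θ b : Fin (n + 1) → ℝ) (x : Fin n → ℝ) {s : ℝ} (hs : ¬ 0 < s) :
    (∏ i : Fin n, gKernel (θ i.castSucc) (b i.castSucc) (x i)) *
      gKernel (θ (Fin.last n)) (b (Fin.last n)) (s - ∑ i, x i) = 0 := by
  by_cases h0 : ∀ i, 0 < x i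
  · rw [gKernel_nonpos_arg (θ (Fin.last n)), mul_zero]
    have := Finset.sum_nonneg (s := Finset.univ) (f := x) (fun i _ => (h0 i).le)
    linarith
  · push Not at h0
    obtain ⟨i, hi⟩ := h0
    rw [Finset.prod_eq_zero (Finset.mem_univ i), zero_mul]
    exact gKernel_nonpos_arg _ _ _ (by linarith)

lemma linF_pos {n : ℕ} (b : Fin (n + 1) → ℝ) (hb : ∀ i, 0 < b i) (y : Fin n → ℝ)
    (h : (∀ i, 0 < y i) ∧ ∑ i, y i < 1) : 0 < linF b y := by
  unfold linF
  have h1 : 0 < 1 - ∑ i, y i := by linarith [h.2]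
  have := Finset.sum_nonneg (s := Finset.univ) (f := fun i : Fin n => b i.castSucc * y i)
    (fun i _ => (mul_pos (hb _) (h.1 i)).le)
  have := mul_pos (hb (Fin.last n)) h1
  linarith

lemma main_lintegral {n : ℕ} (θ b : Fin (n + 1) → ℝ) (hθ : ∀ i, 0 < θ i) (hb : ∀ i, 0 < b i) :
    ∫⁻ y : Fin n → ℝ, ENNReal.ofReal
        (dDens θ y * (linF b y ^ (-(∑ i, θ i)) * Real.Gamma (∑ i, θ i)))
      = ENNReal.ofReal (∏ i, (b i ^ (-(θ i)) * Real.Gamma (θ i))) := by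
  have hΘ : 0 < ∑ i, θ i := Finset.sum_pos (fun i _ => hθ i) Finset.univ_nonempty
  have mg : ∀ c r, Measurable (fun x => ENNReal.ofReal (gKernel c r x)) := fun c r =>
    ((measurable_gKernel c).comp (measurable_const.prodMk measurable_id)).ennreal_ofReal
  have mJ : Measurable (fun p : (Fin n → ℝ) × ℝ => ENNReal.ofReal
      ((∏ i : Fin n, gKernel (θ i.castSucc) (b i.castSucc) (p.1 i)) *
      gKernel (θ (Fin.last n)) (b (Fin.last n)) (p.2 - ∑ i, p.1 i))) := by
    refine (Measurable.mul (Finset.measurable_prod _ fun i _ => ?_) ?_).ennreal_ofReal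
    · exact (measurable_gKernel _).comp (measurable_const.prodMk (by fun_prop))
    · exact (measurable_gKernel _).comp (measurable_const.prodMk (by fun_prop))
  symm
  calc ENNReal.ofReal (∏ i, (b i ^ (-(θ i)) * Real.Gamma (θ i)))
      = ∏ i, ∫⁻ t, ENNReal.ofReal (gKernel (θ i) (b i) t) := by
        rw [ENNReal.ofReal_prod_of_nonneg]
        · exact Finset.prod_congr rfl fun i _ => (lintegral_gKernel (hθ i) (hb i)).symm
        · intro i _
          have := Real.Gamma_pos_of_pos (hθ i)
          have := hb i
          positivity
    _ = (∫⁻ x : Fin n → ℝ, ∏ i : Fin n,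
          ENNReal.ofReal (gKernel (θ i.castSucc) (b i.castSucc) (x i))) *
          ∫⁻ t, ENNReal.ofReal (gKernel (θ (Fin.last n)) (b (Fin.last n)) t) := by
        rw [Fin.prod_univ_castSucc, lintegral_prod_fin
          (fun i : Fin n => fun t => ENNReal.ofReal (gKernel (θ i.castSucc) (b i.castSucc) t))
          (fun i => mg _ _)]
    _ = ∫⁻ x : Fin n → ℝ, ∫⁻ s : ℝ, ENNReal.ofReal
          ((∏ i : Fin n, gKernel (θ i.castSucc) (b i.castSucc) (x i)) *
          gKernel (θ (Fin.last n)) (b (Fin.last n)) (s - ∑ i, x i)) := by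
        rw [← lintegral_mul_const]
        · refine lintegral_congr fun x => ?_
          rw [← ENNReal.ofReal_prod_of_nonneg (fun i _ => gKernel_nonneg _ _ _)]
          simp only [ENNReal.ofReal_mul (Finset.prod_nonneg
            (fun (i : Fin n) _ => gKernel_nonneg (θ i.castSucc) (b i.castSucc) (x i)))]
          rw [lintegral_const_mul' _ _ ENNReal.ofReal_ne_top]
          congr 1
          exact (lintegral_sub_right_eq_self (fun t => ENNReal.ofReal
            (gKernel (θ (Fin.last n)) (b (Fin.last n)) t)) (∑ i, x i)).symm
        · exact Finset.measurable_prod _ fun i _ => (mg _ _).comp (measurable_pi_apply i)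
    _ = ∫⁻ s : ℝ, ∫⁻ x : Fin n → ℝ, ENNReal.ofReal
          ((∏ i : Fin n, gKernel (θ i.castSucc) (b i.castSucc) (x i)) *
          gKernel (θ (Fin.last n)) (b (Fin.last n)) (s - ∑ i, x i)) :=
        lintegral_lintegral_swap mJ.aemeasurable
    _ = ∫⁻ s : ℝ, ∫⁻ y : Fin n → ℝ, ENNReal.ofReal
          (dDens θ y * gKernel (∑ i, θ i) (linF b y) s) := by
        refine lintegral_congr fun s => ?_
        by_cases hs : 0 < s
        · refine (lintegral_smul_fin _
            (mJ.comp (measurable_id.prodMk (measurable_const (a := s)))) hs).trans ?_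
          rw [← lintegral_const_mul' _ _ ENNReal.ofReal_ne_top]
          refine lintegral_congr fun y => ?_
          rw [← pointwise_pos θ b y hs, ENNReal.ofReal_mul (p := s ^ n) (by positivity)]
          rfl
        · simp only [pointwise_nonpos θ b _ hs, gKernel_nonpos_arg _ _ _ hs, mul_zero]
    _ = ∫⁻ y : Fin n → ℝ, ∫⁻ s : ℝ, ENNReal.ofReal
          (dDens θ y * gKernel (∑ i, θ i) (linF b y) s) := by
        apply lintegral_lintegral_swap
        refine Measurable.aemeasurable (Measurable.ennreal_ofReal (Measurable.mul ?_ ?_))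
        · exact (measurable_dDens θ).comp measurable_snd
        · exact (measurable_gKernel _).comp
            (((measurable_linF b).comp measurable_snd).prodMk measurable_fst)
    _ = _ := by
        refine lintegral_congr fun y => ?_
        simp only [ENNReal.ofReal_mul (dDens_nonneg θ y)]
        rw [lintegral_const_mul' _ _ ENNReal.ofReal_ne_top]
        by_cases h : (∀ i, 0 < y i) ∧ ∑ i, y i < 1
        · rw [lintegral_gKernel hΘ (linF_pos b hb y h)]
        · simp [dDens, h]

/-- The generalized Markov–Krein identity for a Dirichlet random vector:
`E[(1 + z Σ aᵢ Yᵢ)^{-θ}] = ∏ (1 + z aᵢ)^{-θᵢ}`, where `θ = Σ θᵢ`. -/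
theorem markov_krein_dirichlet
    {n : ℕ} {Ω : Type*} [MeasurableSpace Ω] (P : Measure Ω) [IsProbabilityMeasure P]
    (θ : Fin (n + 1) → ℝ) (hθ : ∀ i, 0 < θ i)
    (a : Fin (n + 1) → ℝ) (ha : ∀ i, 0 < a i)
    (Y : Ω → Fin (n + 1) → ℝ) (hmY : Measurable Y)
    (hY : Measure.map Y P = dirichletMeasure θ)
    {z : ℝ} (hz : 0 ≤ z) :
    ∫ ω, (1 + z * ∑ i, a i * Y ω i) ^ (-(∑ i, θ i)) ∂P
      = ∏ i, (1 + z * a i) ^ (-(θ i)) := by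
  have hb : ∀ i, 0 < 1 + z * a i := fun i => by
    have := mul_nonneg hz (ha i).le
    linarith
  have hΘ : 0 < ∑ i, θ i := Finset.sum_pos (fun i _ => hθ i) Finset.univ_nonempty
  have hGΘ := Real.Gamma_pos_of_pos hΘ
  have hPG : 0 < ∏ i, Real.Gamma (θ i) :=
    Finset.prod_pos fun i _ => Real.Gamma_pos_of_pos (hθ i)
  have hmf : Measurable (fun y : Fin (n + 1) → ℝ =>
      (1 + z * ∑ i, a i * y i) ^ (-(∑ i, θ i))) := by fun_prop
  have hmT : Measurable (fun (y : Fin n → ℝ) (i : Fin (n + 1)) =>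
      if h : (i : ℕ) < n then y ⟨i, h⟩ else 1 - ∑ j, y j) := by
    refine measurable_pi_lambda _ fun i => ?_
    by_cases h : (i : ℕ) < n
    · simp only [h, dite_true]; fun_prop
    · simp only [h, dite_false]; fun_prop
  have hdens : (fun y : Fin n → ℝ => ENNReal.ofReal
      (if (∀ i, 0 < y i) ∧ ∑ i, y i < 1 then
        (Real.Gamma (∑ i, θ i) / ∏ i, Real.Gamma (θ i)) *
          (∏ i : Fin n, y i ^ (θ i.castSucc - 1)) *
          (1 - ∑ i, y i) ^ (θ (Fin.last n) - 1)
      else 0)) = fun y => ENNReal.ofReal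
        ((Real.Gamma (∑ i, θ i) / ∏ i, Real.Gamma (θ i)) * dDens θ y) := by
    ext y
    unfold dDens
    split_ifs
    · rw [mul_assoc]
    · rw [mul_zero]
  have h1 : ∫ ω, (1 + z * ∑ i, a i * Y ω i) ^ (-(∑ i, θ i)) ∂P =
      ∫ y, (1 + z * ∑ i, a i * y i) ^ (-(∑ i, θ i)) ∂(Measure.map Y P) :=
    (integral_map hmY.aemeasurable hmf.aestronglyMeasurable).symm
  rw [h1, hY, dirichletMeasure, hdens,
    integral_map hmT.aemeasurable hmf.aestronglyMeasurable,
    integral_withDensity_eq_integral_toReal_smul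
      ((measurable_dDens θ).const_mul _).ennreal_ofReal
      (Filter.Eventually.of_forall fun _ => ENNReal.ofReal_lt_top)]
  have hlin : ∀ y : Fin n → ℝ, 1 + z * ∑ i : Fin (n + 1), a i *
      (if h : (i : ℕ) < n then y ⟨i, h⟩ else 1 - ∑ j, y j) = linF (fun i => 1 + z * a i) y := by
    intro y
    rw [Fin.sum_univ_castSucc]
    simp only [Fin.val_castSucc, Fin.is_lt, dite_true, Fin.val_last, lt_irrefl, dite_false, linF,
      add_mul, one_mul, Finset.sum_add_distrib, mul_assoc, ← Finset.mul_sum]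
    simp only [Fin.eta]
    ring
  have hint : ∀ y : Fin n → ℝ, (ENNReal.ofReal
        ((Real.Gamma (∑ i, θ i) / ∏ i, Real.Gamma (θ i)) * dDens θ y)).toReal •
      (1 + z * ∑ i : Fin (n + 1), a i *
      (if h : (i : ℕ) < n then y ⟨i, h⟩ else 1 - ∑ j, y j)) ^ (-(∑ i, θ i)) =
      (∏ i, Real.Gamma (θ i))⁻¹ * (dDens θ y *
        (linF (fun i => 1 + z * a i) y ^ (-(∑ i, θ i)) * Real.Gamma (∑ i, θ i))) := by
    intro y
    rw [hlin, ENNReal.toReal_ofReal (mul_nonneg (by positivity) (dDens_nonneg θ y)), smul_eq_mul]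
    ring
  simp only [hint]
  rw [integral_const_mul, integral_eq_lintegral_of_nonneg_ae, main_lintegral θ _ hθ hb,
    ENNReal.toReal_ofReal, Finset.prod_mul_distrib]
  · field_simp
  · refine Finset.prod_nonneg fun i _ => ?_
    have := Real.Gamma_pos_of_pos (hθ i)
    have := hb i
    positivity
  · refine Filter.Eventually.of_forall fun y => ?_
    by_cases h : (∀ i, 0 < y i) ∧ ∑ i, y i < 1
    · have := linF_pos _ hb y h
      have := dDens_nonneg θ y
      simp only [Pi.zero_apply]
      positivity
    · simp [dDens, h]
  · refine Measurable.aestronglyMeasurable ((measurable_dDens θ).mul ?_)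
    exact ((measurable_linF _).pow_const _).mul_const _
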